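/- arXiv:math/0202048 — 2 statements merged into one kernel-verified Lean document; each statement's English description precedes it below -/
import Mathlib

section
/- Let V be a nonempty topological space and let p be a point of the circle S¹. Let C be the mapping cone of the inclusion {p} × V ↪ S¹ × V, i.e. the quotient of the disjoint union (S¹ × V) ⊔ (V × [0,1]) obtained by identifying (v,0) with (p,v) for every v ∈ V and collapsing V × {1} to a single point. Then C is homotopy equivalent to the wedge S¹ ∨ S(V) of a circle and the unreduced suspension of V. -/
/-!
Both spaces are compared with the half-smash quotient `(S¹ × V) / ({p} × V)`, which is
`V × [0,1]` with the two ends `V × {0}` and `V × {1}` collapsed together to a single point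
(`Pinch V` below).

* Collapsing the cone in the mapping cone gives a map to `Pinch V`. Its homotopy inverse sends the
  segment over `v` to the loop `stretch p v`: down the cone line of `v`, once around the circle
  over `v`, and back up the same cone line. Both composites are deformed to the identity by
  sliding the parameter linearly from `3 * x - 1` to `x`, while the cone is slid off its apex.
* `Pinch V` is the suspension with its two poles identified, so it should be equivalent to the
  suspension with an arc attached at its poles, that is, to `S¹ ∨ S(V)`. The map to the wedge
  (`threePhase`) sends the segment over `v` to: the meridian of `v` from the base pole to the
  other pole, the meridian of a fixed `v₀` back, and then the circle. The homotopy inverse is the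
  quotient map on the suspension and the segment over `v₀` on the circle. On the suspension, the
  composite is deformed to the identity by truncating the path (the free pole is allowed to move);
  on the circle, and in the other composite, a path followed by its reverse is contracted.

All maps are defined on quotients by generators. Homotopies descend to a quotient `X` because a
homotopy of maps `X → Y` is the same as a map from `X` to `C([0,1], Y)`; the circle factor is
treated as a quotient of `[0,1]`, and `[0,1] × V → S¹ × V` is a quotient map because
`[0,1] → S¹` is proper. Points are parametrized by real numbers, clamped to `[0,1]`.
-/

open Topology ContinuousMap unitInterval

/-- The generating relation for the unreduced suspension: collapse `V × {0}` to one point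
and `V × {1}` to another point. -/
def SuspRel (V : Type*) (a b : V × unitInterval) : Prop :=
  a = b ∨ (a.2 = 0 ∧ b.2 = 0) ∨ (a.2 = 1 ∧ b.2 = 1)

/-- The unreduced suspension `S(V)` of a topological space `V`. -/
def Susp (V : Type*) [TopologicalSpace V] : Type _ :=
  Quot (SuspRel V)

instance (V : Type*) [TopologicalSpace V] : TopologicalSpace (Susp V) :=
  inferInstanceAs (TopologicalSpace (Quot _))

/-- The generating relation for the wedge: identify the two basepoints. -/
def WedgeRel {X Y : Type*} (x₀ : X) (y₀ : Y) (a b : X ⊕ Y) : Prop :=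
  a = b ∨ (a = Sum.inl x₀ ∧ b = Sum.inr y₀) ∨ (a = Sum.inr y₀ ∧ b = Sum.inl x₀)

/-- The wedge (one-point union) `X ∨ Y` of two pointed spaces. -/
def Wedge {X Y : Type*} [TopologicalSpace X] [TopologicalSpace Y] (x₀ : X) (y₀ : Y) :
    Type _ :=
  Quot (WedgeRel x₀ y₀)

instance {X Y : Type*} [TopologicalSpace X] [TopologicalSpace Y] (x₀ : X) (y₀ : Y) :
    TopologicalSpace (Wedge x₀ y₀) :=
  inferInstanceAs (TopologicalSpace (Quot _))

/-- The generating relation for the mapping cone of the inclusion `{p} × V ↪ C × V`: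
on `(C × V) ⊔ (V × [0,1])`, identify `(v, 0)` with `(p, v)` for every `v`, and collapse
`V × {1}` to a single point. -/
def MappingConeRel {C V : Type*} (p : C) (a b : (C × V) ⊕ (V × unitInterval)) : Prop :=
  a = b
  ∨ (∃ v : V, a = Sum.inl (p, v) ∧ b = Sum.inr (v, 0))
  ∨ (∃ v : V, a = Sum.inr (v, 0) ∧ b = Sum.inl (p, v))
  ∨ (∃ v w : V, a = Sum.inr (v, 1) ∧ b = Sum.inr (w, 1))

/-- The mapping cone of the inclusion `{p} × V ↪ C × V`. -/
def MappingCone {C V : Type*} [TopologicalSpace C] [TopologicalSpace V] (p : C) : Type _ :=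
  Quot (MappingConeRel (V := V) p)

instance {C V : Type*} [TopologicalSpace C] [TopologicalSpace V] (p : C) :
    TopologicalSpace (MappingCone (V := V) p) :=
  inferInstanceAs (TopologicalSpace (Quot _))

open Set

/-! ### The circle as a quotient of the interval -/

/-- The standard loop at `p`, traversed once by `x ∈ [0,1]`. -/
noncomputable def circlePt (p : Circle) (x : ℝ) : Circle := p * Circle.exp (2 * Real.pi * x)

lemma continuous_circlePt (p : Circle) : Continuous (circlePt p) := by
  unfold circlePt; fun_prop

lemma circlePt_zero (p : Circle) : circlePt p 0 = p := by simp [circlePt]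

lemma circlePt_one (p : Circle) : circlePt p 1 = p := by simp [circlePt]

lemma circlePt_surj (p z : Circle) : ∃ s : I, circlePt p s = z := by
  obtain ⟨θ, hθ⟩ : ∃ θ : ℝ, Circle.exp θ = p⁻¹ * z := ⟨_, Circle.exp_arg _⟩
  refine ⟨⟨Int.fract (θ / (2 * Real.pi)), Int.fract_nonneg _, (Int.fract_lt_one _).le⟩, ?_⟩
  have h : Circle.exp (2 * Real.pi * Int.fract (θ / (2 * Real.pi))) = Circle.exp θ := by
    rw [Circle.exp_eq_exp]
    refine ⟨-⌊θ / (2 * Real.pi)⌋, ?_⟩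
    rw [Int.fract]
    push_cast
    field_simp
    ring
  simp only [circlePt]
  rw [h, hθ, mul_inv_cancel_left]

lemma circlePt_eq {p : Circle} {s t : I} (h : circlePt p s = circlePt p t) :
    s = t ∨ (s = 0 ∧ t = 1) ∨ (s = 1 ∧ t = 0) := by
  rw [circlePt, circlePt, mul_right_inj, Circle.exp_eq_exp] at h
  obtain ⟨m, hm⟩ := h
  have hπ := Real.pi_pos
  have hst : (s : ℝ) = t + m := by
    have : 2 * Real.pi * (s : ℝ) = 2 * Real.pi * (t + m) := by rw [hm]; ring
    exact mul_left_cancel₀ (by positivity) this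
  have hs0 := s.2.1
  have hs1 := s.2.2
  have ht0 := t.2.1
  have ht1 := t.2.2
  have h1 : m ≤ 1 := by
    by_contra! hc
    have : (2 : ℝ) ≤ m := by exact_mod_cast hc
    linarith
  have h2 : -1 ≤ m := by
    by_contra! hc
    have : (m : ℝ) ≤ -2 := by exact_mod_cast (by omega : m ≤ -2)
    linarith
  interval_cases m
  · right; left
    constructor <;> apply Subtype.ext <;> push_cast at * <;> linarith
  · left
    apply Subtype.ext
    push_cast at *; linarith
  · right; right
    constructor <;> apply Subtype.ext <;> push_cast at * <;> linarith

/-- A continuous family of loops, indexed by `A`, is a continuous map on `S¹ × A`. -/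
lemma circle_lift {A Y : Type*} [TopologicalSpace A] [TopologicalSpace Y] (p : Circle)
    (f : A → ℝ → Y) (hf : Continuous fun a : A × ℝ => f a.1 a.2) (h01 : ∀ a, f a 0 = f a 1) :
    ∃ g : C(Circle × A, Y), ∀ a, ∀ x ∈ Icc (0 : ℝ) 1, g (circlePt p x, a) = f a x := by
  let π : C(I × A, Circle × A) :=
    ⟨Prod.map (fun s : I => circlePt p s) id,
      ((continuous_circlePt p).comp continuous_subtype_val).prodMap continuous_id⟩
  have hπ : IsQuotientMap π := by
    have h1 : IsProperMap (fun s : I => circlePt p s) :=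
      ((continuous_circlePt p).comp continuous_subtype_val).isProperMap
    refine (h1.prodMap (isProperMap_id (X := A))).isClosedMap.isQuotientMap π.continuous ?_
    rintro ⟨z, a⟩
    obtain ⟨s, hs⟩ := circlePt_surj p z
    exact ⟨(s, a), by simp [hs]⟩
  let F : C(I × A, Y) := ⟨fun a => f a.2 a.1, hf.comp (by fun_prop : Continuous
    fun a : I × A => (a.2, (a.1 : ℝ)))⟩
  have hF : Function.FactorsThrough F π := by
    rintro ⟨s, a⟩ ⟨t, b⟩ h
    obtain ⟨h1, h2⟩ := Prod.ext_iff.1 h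
    change circlePt p s = circlePt p t at h1
    obtain rfl : a = b := h2
    change f a s = f a t
    rcases circlePt_eq h1 with rfl | ⟨rfl, rfl⟩ | ⟨rfl, rfl⟩
    · rfl
    · simpa using h01 a
    · simpa using (h01 a).symm
  refine ⟨hπ.lift F hF, fun a x hx => ?_⟩
  exact DFunLike.congr_fun (hπ.lift_comp F hF) ((⟨x, hx⟩, a) : I × A)

/-- The retraction of the real line onto the unit interval. -/
noncomputable def clamp (x : ℝ) : I := projIcc 0 1 zero_le_one x

@[fun_prop]
lemma continuous_clamp : Continuous clamp := continuous_projIcc (h := zero_le_one)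

lemma clamp_le {x : ℝ} (hx : x ≤ 0) : clamp x = 0 := projIcc_of_le_left _ hx

lemma clamp_ge {x : ℝ} (hx : 1 ≤ x) : clamp x = 1 := projIcc_of_right_le _ hx

lemma clamp_mem {x : ℝ} (hx : x ∈ Icc (0 : ℝ) 1) : clamp x = ⟨x, hx⟩ := projIcc_of_mem _ hx

lemma clamp_coe (s : I) : clamp (s : ℝ) = s := projIcc_val _ s

/-! ### The three quotient spaces: points, maps and homotopies -/

section Pinch

/-- The relation on `V × [0,1]` identifying all points of `V × {0, 1}`. -/
def PinchRel (V : Type*) (a b : V × I) : Prop :=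
  (a.2 = 0 ∨ a.2 = 1) ∧ (b.2 = 0 ∨ b.2 = 1)

/-- The space `V × [0,1]` with `V × {0, 1}` collapsed to one point; it stands for
`(S¹ × V) / ({p} × V)`. -/
def Pinch (V : Type*) [TopologicalSpace V] : Type _ := Quot (PinchRel V)

instance (V : Type*) [TopologicalSpace V] : TopologicalSpace (Pinch V) :=
  inferInstanceAs (TopologicalSpace (Quot _))

variable {V : Type*} [TopologicalSpace V] {Y : Type*} [TopologicalSpace Y]

/-- The point of `Pinch V` at (clamped) height `x` over `v`. -/
noncomputable def pinchPt (v : V) (x : ℝ) : Pinch V := Quot.mk _ (v, clamp x)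

@[fun_prop]
lemma continuous_pinchPt {A : Type*} [TopologicalSpace A] {f : A → V} {g : A → ℝ}
    (hf : Continuous f) (hg : Continuous g) : Continuous fun a => pinchPt (f a) (g a) :=
  continuous_quot_mk.comp (by fun_prop : Continuous fun a => (f a, clamp (g a)))

lemma pinchPt_end (v w : V) {x y : ℝ} (hx : x ≤ 0 ∨ 1 ≤ x) (hy : y ≤ 0 ∨ 1 ≤ y) :
    pinchPt v x = pinchPt w y :=
  Quot.sound ⟨hx.imp clamp_le clamp_ge, hy.imp clamp_le clamp_ge⟩

lemma pinch_lift (f : V → ℝ → Y) (hf : Continuous fun a : V × ℝ => f a.1 a.2)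
    (h0 : ∀ v w, f v 0 = f w 0) (h1 : ∀ v w, f v 1 = f w 0) :
    ∃ h : C(Pinch V, Y), ∀ v, ∀ x ∈ Icc (0 : ℝ) 1, h (pinchPt v x) = f v x := by
  refine ⟨⟨Quot.lift (fun a : V × I => f a.1 a.2) ?_, ?_⟩, ?_⟩
  · rintro ⟨v, s⟩ ⟨w, t⟩ ⟨hs, ht⟩
    dsimp only at hs ht
    rcases hs with rfl | rfl <;> rcases ht with rfl | rfl <;> simp [h1 v w, h1 w v, h0 v w]
  · exact continuous_quot_lift _ (hf.comp (by fun_prop : Continuous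
      fun a : V × I => (a.1, (a.2 : ℝ))))
  · intro v x hx
    simp only [pinchPt, clamp_mem hx]; rfl

lemma pinch_ind {P : Pinch V → Prop} (h : ∀ v, ∀ x ∈ Icc (0 : ℝ) 1, P (pinchPt v x)) (a) :
    P a := by
  obtain ⟨⟨v, s⟩, rfl⟩ := Quot.exists_rep a
  simpa [pinchPt, clamp_coe] using h v s s.2

/-- A family of functions of `x`, jointly continuous with the time `τ`, read as a family of
paths in `τ`. -/
noncomputable def timePath (f : ℝ → V → ℝ → Y)
    (hf : Continuous fun a : ℝ × V × ℝ => f a.1 a.2.1 a.2.2) (v : V) (x : ℝ) : C(I, Y) :=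
  ⟨fun τ => f τ v x, hf.comp (by fun_prop : Continuous fun τ : I => ((τ : ℝ), v, x))⟩

lemma continuous_timePath (f : ℝ → V → ℝ → Y)
    (hf : Continuous fun a : ℝ × V × ℝ => f a.1 a.2.1 a.2.2) :
    Continuous fun a : V × ℝ => timePath f hf a.1 a.2 := by
  refine ContinuousMap.continuous_of_continuous_uncurry _ ?_
  exact hf.comp (by fun_prop : Continuous fun a : (V × ℝ) × I => ((a.2 : ℝ), a.1.1, a.1.2))

lemma homotopic_of_paths {X : Type*} [TopologicalSpace X] {φ ψ : C(X, Y)} (h : C(X, C(I, Y)))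
    (h0 : ∀ x, h x 0 = φ x) (h1 : ∀ x, h x 1 = ψ x) : φ.Homotopic ψ :=
  ⟨{ toFun := fun a => h a.2 a.1
     continuous_toFun := by fun_prop
     map_zero_left := h0
     map_one_left := h1 }⟩

lemma pinch_homotopic {φ ψ : C(Pinch V, Y)} (f : ℝ → V → ℝ → Y)
    (hf : Continuous fun a : ℝ × V × ℝ => f a.1 a.2.1 a.2.2)
    (h0 : ∀ τ ∈ Icc (0 : ℝ) 1, ∀ v w, f τ v 0 = f τ w 0)
    (h1 : ∀ τ ∈ Icc (0 : ℝ) 1, ∀ v w, f τ v 1 = f τ w 0)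
    (hφ : ∀ v, ∀ x ∈ Icc (0 : ℝ) 1, f 0 v x = φ (pinchPt v x))
    (hψ : ∀ v, ∀ x ∈ Icc (0 : ℝ) 1, f 1 v x = ψ (pinchPt v x)) : φ.Homotopic ψ := by
  obtain ⟨h, hh⟩ := pinch_lift (timePath f hf) (continuous_timePath f hf)
    (fun v w => ContinuousMap.ext fun τ => h0 τ τ.2 v w)
    (fun v w => ContinuousMap.ext fun τ => h1 τ τ.2 v w)
  refine homotopic_of_paths h (pinch_ind fun v x hx => ?_) (pinch_ind fun v x hx => ?_)
  · rw [hh v x hx, ← hφ v x hx]; simp [timePath]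
  · rw [hh v x hx, ← hψ v x hx]; simp [timePath]

end Pinch

section Cone

variable {V : Type*} [TopologicalSpace V] {Y : Type*} [TopologicalSpace Y] (p : Circle)

/-- The point of the mapping cone on the circle over `v`, at (clamped) parameter `x`. -/
noncomputable def coneLoop (v : V) (x : ℝ) : MappingCone (V := V) p :=
  Quot.mk _ (Sum.inl (circlePt p (clamp x), v))

/-- The point of the mapping cone on the cone line of `v`, at (clamped) height `x`. -/
noncomputable def coneArm (v : V) (x : ℝ) : MappingCone (V := V) p :=
  Quot.mk _ (Sum.inr (v, clamp x))

@[fun_prop]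
lemma continuous_coneLoop {A : Type*} [TopologicalSpace A] {f : A → V} {g : A → ℝ}
    (hf : Continuous f) (hg : Continuous g) : Continuous fun a => coneLoop p (f a) (g a) := by
  have := continuous_circlePt p
  exact continuous_quot_mk.comp
    (by fun_prop : Continuous fun a => (Sum.inl (circlePt p (clamp (g a)), f a) :
      (Circle × V) ⊕ (V × I)))

@[fun_prop]
lemma continuous_coneArm {A : Type*} [TopologicalSpace A] {f : A → V} {g : A → ℝ}
    (hf : Continuous f) (hg : Continuous g) : Continuous fun a => coneArm p (f a) (g a) :=
  continuous_quot_mk.comp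
    (by fun_prop : Continuous fun a => (Sum.inr (f a, clamp (g a)) : (Circle × V) ⊕ (V × I)))

lemma coneLoop_end (v : V) {x y : ℝ} (hx : x ≤ 0 ∨ 1 ≤ x) (hy : y ≤ 0) :
    coneLoop p v x = coneArm p v y := by
  refine Quot.sound (Or.inr (Or.inl ⟨v, ?_, ?_⟩))
  · rcases hx with hx | hx
    · rw [clamp_le hx, Icc.coe_zero, circlePt_zero]
    · rw [clamp_ge hx, Icc.coe_one, circlePt_one]
  · rw [clamp_le hy]

lemma coneArm_apex (v w : V) {x y : ℝ} (hx : 1 ≤ x) (hy : 1 ≤ y) :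
    coneArm p v x = coneArm p w y :=
  Quot.sound (Or.inr (Or.inr (Or.inr ⟨v, w, by rw [clamp_ge hx], by rw [clamp_ge hy]⟩)))

lemma cone_lift (f g : V → ℝ → Y) (hf : Continuous fun a : V × ℝ => f a.1 a.2)
    (hg : Continuous fun a : V × ℝ => g a.1 a.2)
    (h0 : ∀ v, f v 0 = g v 0) (h1 : ∀ v, f v 1 = g v 0) (hg1 : ∀ v w, g v 1 = g w 1) :
    ∃ h : C(MappingCone (V := V) p, Y),
      (∀ v, ∀ x ∈ Icc (0 : ℝ) 1, h (coneLoop p v x) = f v x) ∧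
      (∀ v, ∀ x ∈ Icc (0 : ℝ) 1, h (coneArm p v x) = g v x) := by
  obtain ⟨k, hk⟩ := circle_lift p f hf fun v => (h0 v).trans (h1 v).symm
  have hkp : ∀ v, k (p, v) = g v 0 := fun v => by
    rw [← h0 v, ← hk v 0 (by simp), circlePt_zero]
  refine ⟨⟨Quot.lift (Sum.elim k fun a : V × I => g a.1 a.2) ?_, ?_⟩, ?_, ?_⟩
  · rintro a b (rfl | ⟨v, rfl, rfl⟩ | ⟨v, rfl, rfl⟩ | ⟨v, w, rfl, rfl⟩)
    · rfl
    · simpa using hkp v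
    · simpa using (hkp v).symm
    · simpa using hg1 v w
  · exact continuous_quot_lift _ (k.continuous.sumElim (hg.comp (by fun_prop : Continuous
      fun a : V × I => (a.1, (a.2 : ℝ)))))
  · intro v x hx
    simp only [coneLoop, clamp_mem hx]; exact hk v x hx
  · intro v x hx
    simp only [coneArm, clamp_mem hx]; rfl

lemma cone_ind {P : MappingCone (V := V) p → Prop}
    (h : ∀ v, ∀ x ∈ Icc (0 : ℝ) 1, P (coneLoop p v x))
    (h' : ∀ v, ∀ x ∈ Icc (0 : ℝ) 1, P (coneArm p v x)) (a) : P a := by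
  obtain ⟨⟨z, v⟩ | ⟨v, s⟩, rfl⟩ := Quot.exists_rep a
  · obtain ⟨s, rfl⟩ := circlePt_surj p z
    simpa [coneLoop, clamp_coe] using h v s s.2
  · simpa [coneArm, clamp_coe] using h' v s s.2

lemma cone_homotopic {φ ψ : C(MappingCone (V := V) p, Y)} (f g : ℝ → V → ℝ → Y)
    (hf : Continuous fun a : ℝ × V × ℝ => f a.1 a.2.1 a.2.2)
    (hg : Continuous fun a : ℝ × V × ℝ => g a.1 a.2.1 a.2.2)
    (h0 : ∀ τ ∈ Icc (0 : ℝ) 1, ∀ v, f τ v 0 = g τ v 0)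
    (h1 : ∀ τ ∈ Icc (0 : ℝ) 1, ∀ v, f τ v 1 = g τ v 0)
    (hg1 : ∀ τ ∈ Icc (0 : ℝ) 1, ∀ v w, g τ v 1 = g τ w 1)
    (hφ : ∀ v, ∀ x ∈ Icc (0 : ℝ) 1, f 0 v x = φ (coneLoop p v x))
    (hφ' : ∀ v, ∀ x ∈ Icc (0 : ℝ) 1, g 0 v x = φ (coneArm p v x))
    (hψ : ∀ v, ∀ x ∈ Icc (0 : ℝ) 1, f 1 v x = ψ (coneLoop p v x))
    (hψ' : ∀ v, ∀ x ∈ Icc (0 : ℝ) 1, g 1 v x = ψ (coneArm p v x)) : φ.Homotopic ψ := by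
  obtain ⟨h, hh, hh'⟩ := cone_lift p (timePath f hf) (timePath g hg)
    (continuous_timePath f hf) (continuous_timePath g hg)
    (fun v => ContinuousMap.ext fun τ => h0 τ τ.2 v)
    (fun v => ContinuousMap.ext fun τ => h1 τ τ.2 v)
    (fun v w => ContinuousMap.ext fun τ => hg1 τ τ.2 v w)
  refine homotopic_of_paths h (cone_ind p (fun v x hx => ?_) (fun v x hx => ?_))
    (cone_ind p (fun v x hx => ?_) (fun v x hx => ?_))
  · rw [hh v x hx, ← hφ v x hx]; simp [timePath]
  · rw [hh' v x hx, ← hφ' v x hx]; simp [timePath]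
  · rw [hh v x hx, ← hψ v x hx]; simp [timePath]
  · rw [hh' v x hx, ← hψ' v x hx]; simp [timePath]

end Cone

section WedgeSusp

/-- The wedge `S¹ ∨ S(V)`, based at `p` and at the pole `V × {0}`. -/
abbrev CircleSusp {V : Type*} [TopologicalSpace V] (p : Circle) (v₀ : V) : Type _ :=
  Wedge p (Quot.mk (SuspRel V) (v₀, 0) : Susp V)

variable {V : Type*} [TopologicalSpace V] {Y : Type*} [TopologicalSpace Y] (p : Circle) (v₀ : V)

/-- The point of the circle of the wedge at (clamped) parameter `x`. -/
noncomputable def wedgeLoop (x : ℝ) : CircleSusp p v₀ :=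
  Quot.mk _ (Sum.inl (circlePt p (clamp x)))

/-- The point of the suspension in the wedge on the meridian of `v`, at (clamped) height `x`. -/
noncomputable def wedgeArm (v : V) (x : ℝ) : CircleSusp p v₀ :=
  Quot.mk _ (Sum.inr (Quot.mk _ (v, clamp x)))

@[fun_prop]
lemma continuous_wedgeLoop {A : Type*} [TopologicalSpace A] {g : A → ℝ}
    (hg : Continuous g) : Continuous fun a => wedgeLoop p v₀ (g a) := by
  have := continuous_circlePt p
  exact continuous_quot_mk.comp
    (by fun_prop : Continuous fun a => (Sum.inl (circlePt p (clamp (g a))) : Circle ⊕ Susp V))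

@[fun_prop]
lemma continuous_wedgeArm {A : Type*} [TopologicalSpace A] {f : A → V} {g : A → ℝ}
    (hf : Continuous f) (hg : Continuous g) : Continuous fun a => wedgeArm p v₀ (f a) (g a) := by
  have h : Continuous fun a => (Quot.mk _ (f a, clamp (g a)) : Susp V) :=
    continuous_quot_mk.comp (by fun_prop : Continuous fun a => (f a, clamp (g a)))
  exact continuous_quot_mk.comp (continuous_inr.comp h)

lemma wedgeArm_zero (v w : V) {x y : ℝ} (hx : x ≤ 0) (hy : y ≤ 0) :
    wedgeArm p v₀ v x = wedgeArm p v₀ w y := by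
  have : (Quot.mk (SuspRel V) (v, clamp x)) = Quot.mk (SuspRel V) (w, clamp y) :=
    Quot.sound (Or.inr (Or.inl ⟨clamp_le hx, clamp_le hy⟩))
  exact congrArg (fun z : Susp V => (Quot.mk _ (Sum.inr z) : CircleSusp p v₀)) this

lemma wedgeArm_one (v w : V) {x y : ℝ} (hx : 1 ≤ x) (hy : 1 ≤ y) :
    wedgeArm p v₀ v x = wedgeArm p v₀ w y := by
  have : (Quot.mk (SuspRel V) (v, clamp x)) = Quot.mk (SuspRel V) (w, clamp y) :=
    Quot.sound (Or.inr (Or.inr ⟨clamp_ge hx, clamp_ge hy⟩))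
  exact congrArg (fun z : Susp V => (Quot.mk _ (Sum.inr z) : CircleSusp p v₀)) this

lemma wedgeLoop_end (v : V) {x y : ℝ} (hx : x ≤ 0 ∨ 1 ≤ x) (hy : y ≤ 0) :
    wedgeLoop p v₀ x = wedgeArm p v₀ v y := by
  rw [wedgeArm_zero p v₀ v v₀ hy hy]
  refine Quot.sound (Or.inr (Or.inl ⟨?_, ?_⟩))
  · rcases hx with hx | hx
    · rw [clamp_le hx, Icc.coe_zero, circlePt_zero]
    · rw [clamp_ge hx, Icc.coe_one, circlePt_one]
  · rw [clamp_le hy]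

lemma wedge_lift (f : ℝ → Y) (g : V → ℝ → Y) (hf : Continuous f)
    (hg : Continuous fun a : V × ℝ => g a.1 a.2)
    (h0 : ∀ v, f 0 = g v 0) (h1 : f 1 = f 0) (hg1 : ∀ v w, g v 1 = g w 1) :
    ∃ h : C(CircleSusp p v₀, Y),
      (∀ x ∈ Icc (0 : ℝ) 1, h (wedgeLoop p v₀ x) = f x) ∧
      (∀ v, ∀ x ∈ Icc (0 : ℝ) 1, h (wedgeArm p v₀ v x) = g v x) := by
  obtain ⟨k, hk⟩ := circle_lift p (fun _ : Unit => f) (hf.comp continuous_snd) fun _ => h1.symm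
  let S : Susp V → Y := Quot.lift (fun a : V × I => g a.1 a.2) (by
    rintro ⟨v, s⟩ ⟨w, t⟩ (h | ⟨h, h'⟩ | ⟨h, h'⟩)
    · rw [h]
    · dsimp only at h h'
      subst h h'
      simpa using (h0 v).symm.trans (h0 w)
    · dsimp only at h h'
      subst h h'
      simpa using hg1 v w)
  have hS : Continuous S := continuous_quot_lift _ (hg.comp (by fun_prop : Continuous
      fun a : V × I => (a.1, (a.2 : ℝ))))
  have hkp : k (p, ()) = S (Quot.mk _ (v₀, 0)) := by
    have := hk () 0 (by simp)
    rw [circlePt_zero] at this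
    simpa [S] using this.trans (h0 v₀)
  refine ⟨⟨Quot.lift (Sum.elim (fun z => k (z, ())) S) ?_, ?_⟩, ?_, ?_⟩
  · rintro a b (rfl | ⟨rfl, rfl⟩ | ⟨rfl, rfl⟩)
    · rfl
    · exact hkp
    · exact hkp.symm
  · exact continuous_quot_lift _
      (Continuous.sumElim (by fun_prop : Continuous fun z => k (z, ())) hS)
  · intro x hx
    simp only [wedgeLoop, clamp_mem hx]; exact hk () x hx
  · intro v x hx
    simp only [wedgeArm, clamp_mem hx]; rfl

lemma wedge_ind {P : CircleSusp p v₀ → Prop}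
    (h : ∀ x ∈ Icc (0 : ℝ) 1, P (wedgeLoop p v₀ x))
    (h' : ∀ v, ∀ x ∈ Icc (0 : ℝ) 1, P (wedgeArm p v₀ v x)) (a) : P a := by
  obtain ⟨z | b, rfl⟩ := Quot.exists_rep a
  · obtain ⟨s, rfl⟩ := circlePt_surj p z
    simpa [wedgeLoop, clamp_coe] using h s s.2
  · obtain ⟨⟨v, s⟩, rfl⟩ := Quot.exists_rep b
    simpa [wedgeArm, clamp_coe] using h' v s s.2

lemma wedge_homotopic {φ ψ : C(CircleSusp p v₀, Y)} (f : ℝ → ℝ → Y) (g : ℝ → V → ℝ → Y)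
    (hf : Continuous fun a : ℝ × ℝ => f a.1 a.2)
    (hg : Continuous fun a : ℝ × V × ℝ => g a.1 a.2.1 a.2.2)
    (h0 : ∀ τ ∈ Icc (0 : ℝ) 1, ∀ v, f τ 0 = g τ v 0)
    (h1 : ∀ τ ∈ Icc (0 : ℝ) 1, f τ 1 = f τ 0)
    (hg1 : ∀ τ ∈ Icc (0 : ℝ) 1, ∀ v w, g τ v 1 = g τ w 1)
    (hφ : ∀ x ∈ Icc (0 : ℝ) 1, f 0 x = φ (wedgeLoop p v₀ x))
    (hφ' : ∀ v, ∀ x ∈ Icc (0 : ℝ) 1, g 0 v x = φ (wedgeArm p v₀ v x))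
    (hψ : ∀ x ∈ Icc (0 : ℝ) 1, f 1 x = ψ (wedgeLoop p v₀ x))
    (hψ' : ∀ v, ∀ x ∈ Icc (0 : ℝ) 1, g 1 v x = ψ (wedgeArm p v₀ v x)) : φ.Homotopic ψ := by
  have hf' : Continuous fun a : ℝ × V × ℝ => f a.1 a.2.2 :=
    hf.comp (by fun_prop : Continuous fun a : ℝ × V × ℝ => (a.1, a.2.2))
  obtain ⟨h, hh, hh'⟩ := wedge_lift p v₀ (timePath (fun τ _ x => f τ x) hf' v₀) (timePath g hg)
    ((continuous_timePath (fun τ _ x => f τ x) hf').comp (by fun_prop : Continuous fun x : ℝ => (v₀, x)))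
    (continuous_timePath g hg)
    (fun v => ContinuousMap.ext fun τ => h0 τ τ.2 v)
    (ContinuousMap.ext fun τ => h1 τ τ.2)
    (fun v w => ContinuousMap.ext fun τ => hg1 τ τ.2 v w)
  refine homotopic_of_paths h (wedge_ind p v₀ (fun x hx => ?_) (fun v x hx => ?_))
    (wedge_ind p v₀ (fun x hx => ?_) (fun v x hx => ?_))
  · rw [hh x hx, ← hφ x hx]; simp [timePath]
  · rw [hh' v x hx, ← hφ' v x hx]; simp [timePath]
  · rw [hh x hx, ← hψ x hx]; simp [timePath]
  · rw [hh' v x hx, ← hψ' v x hx]; simp [timePath]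

end WedgeSusp

/-! ### Collapsing the cone -/

section ConePinch

variable {V : Type*} [TopologicalSpace V] (p : Circle)

/-- The path in the mapping cone which, as `y` runs from `-1` to `2`, comes down the cone line of
`v`, goes once around the circle over `v`, and climbs back to the apex. -/
noncomputable def stretch (v : V) (y : ℝ) : MappingCone (V := V) p :=
  if max (-y) (y - 1) ≤ 0 then coneLoop p v y else coneArm p v (max (-y) (y - 1))

@[fun_prop]
lemma continuous_stretch {A : Type*} [TopologicalSpace A] {f : A → V} {g : A → ℝ}
    (hf : Continuous f) (hg : Continuous g) : Continuous fun a => stretch p (f a) (g a) := by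
  unfold stretch
  refine Continuous.if_le (by fun_prop) (by fun_prop) (by fun_prop) (by fun_prop) ?_
  intro a ha
  refine coneLoop_end p _ ?_ ha.le
  rcases max_choice (-g a) (g a - 1) with h | h
  · left; linarith
  · right; linarith

lemma stretch_mid (v : V) {y : ℝ} (hy : y ∈ Icc (0 : ℝ) 1) : stretch p v y = coneLoop p v y :=
  if_pos (max_le (by linarith [hy.1]) (by linarith [hy.2]))

lemma stretch_low (v : V) {y : ℝ} (hy : y ≤ 0) : stretch p v y = coneArm p v (-y) := by
  unfold stretch
  rw [max_eq_left (by linarith)]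
  split_ifs with h
  · exact coneLoop_end p v (Or.inl hy) h
  · rfl

lemma stretch_high (v : V) {y : ℝ} (hy : 1 ≤ y) : stretch p v y = coneArm p v (y - 1) := by
  unfold stretch
  rw [max_eq_right (by linarith)]
  split_ifs with h
  · exact coneLoop_end p v (Or.inr hy) h
  · rfl

lemma mappingCone_htpyEquiv_pinch : Nonempty (MappingCone (V := V) p ≃ₕ Pinch V) := by
  obtain ⟨F, hF, hF'⟩ := cone_lift (V := V) p pinchPt (fun v _ => pinchPt v 0)
    (by fun_prop) (by fun_prop) (fun v => rfl) (fun v => pinchPt_end _ _ (by simp) (by simp))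
    (fun v w => pinchPt_end _ _ (by simp) (by simp))
  have apex : ∀ (v w : V) (y z : ℝ), y ≤ -1 ∨ 2 ≤ y → z ≤ -1 ∨ 2 ≤ z →
      stretch p v y = stretch p w z := by
    rintro v w y z (hy | hy) (hz | hz)
    · rw [stretch_low p v (by linarith), stretch_low p w (by linarith)]
      exact coneArm_apex p _ _ (by linarith) (by linarith)
    · rw [stretch_low p v (by linarith), stretch_high p w (by linarith)]
      exact coneArm_apex p _ _ (by linarith) (by linarith)
    · rw [stretch_high p v (by linarith), stretch_low p w (by linarith)]
      exact coneArm_apex p _ _ (by linarith) (by linarith)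
    · rw [stretch_high p v (by linarith), stretch_high p w (by linarith)]
      exact coneArm_apex p _ _ (by linarith) (by linarith)
  obtain ⟨G, hG⟩ := pinch_lift (V := V) (fun v x => stretch p v (3 * x - 1)) (by fun_prop)
    (fun v w => apex _ _ _ _ (by norm_num) (by norm_num))
    (fun v w => apex _ _ _ _ (by norm_num) (by norm_num))
  have hFs : ∀ (v : V), ∀ y ∈ Icc (-1 : ℝ) 2, F (stretch p v y) = pinchPt v y := by
    rintro v y ⟨hy1, hy2⟩
    rcases le_total y 0 with h | h
    · rw [stretch_low p v h, hF' _ _ ⟨by linarith, by linarith⟩]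
      exact pinchPt_end _ _ (by simp) (by simp [h])
    rcases le_total y 1 with h' | h'
    · rw [stretch_mid p v ⟨h, h'⟩, hF _ _ ⟨h, h'⟩]
    · rw [stretch_high p v h', hF' _ _ ⟨by linarith, by linarith⟩]
      exact pinchPt_end _ _ (by simp) (by simp [h'])
  refine ⟨⟨F, G, ?_, ?_⟩⟩
  · refine cone_homotopic p (fun τ v x => stretch p v ((1 - τ) * (3 * x - 1) + τ * x))
      (fun τ v x => coneArm p v (max x (1 - τ))) (by fun_prop) (by fun_prop) ?_ ?_ ?_ ?_ ?_ ?_ ?_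
    · rintro τ ⟨h0, h1⟩ v
      rw [stretch_low p v (by linarith), max_eq_right (by linarith)]
      congr 1; ring
    · rintro τ ⟨h0, h1⟩ v
      rw [stretch_high p v (by linarith), max_eq_right (by linarith)]
      congr 1; ring
    · rintro τ - v w
      exact coneArm_apex p _ _ (le_max_left _ _) (le_max_left _ _)
    · intro v x hx
      rw [ContinuousMap.comp_apply, hF v x hx, hG v x hx]
      congr 1; ring
    · intro v x hx
      rw [ContinuousMap.comp_apply, hF' v x hx, hG v 0 (by simp), stretch_low p v (by norm_num)]
      exact coneArm_apex p _ _ (by simp) (by norm_num)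
    · intro v x hx
      have : (1 - 1) * (3 * x - 1) + 1 * x = x := by ring
      rw [this, stretch_mid p v hx]; rfl
    · intro v x hx
      rw [sub_self, max_eq_left hx.1]; rfl
  · refine pinch_homotopic (fun τ v x => pinchPt v ((1 - τ) * (3 * x - 1) + τ * x))
      (by fun_prop) ?_ ?_ ?_ ?_
    · rintro τ ⟨h0, h1⟩ v w
      exact pinchPt_end _ _ (Or.inl (by linarith)) (Or.inl (by linarith))
    · rintro τ ⟨h0, h1⟩ v w
      exact pinchPt_end _ _ (Or.inr (by linarith)) (Or.inl (by linarith))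
    · rintro v x ⟨h0, h1⟩
      rw [ContinuousMap.comp_apply, hG v x ⟨h0, h1⟩, hFs v _ ⟨by linarith, by linarith⟩]
      congr 1; ring
    · intro v x hx
      have : (1 - 1) * (3 * x - 1) + 1 * x = x := by ring
      rw [this]; rfl

end ConePinch

/-! ### Separating the poles -/

section PinchWedge

variable {V : Type*} [TopologicalSpace V] (p : Circle) (v₀ : V)

/-- The path which, as `y` runs from `1` to `3`, follows the meridian of `v₀` from the pole
`V × {1}` to the base point and then the circle. -/
noncomputable def returnPath (y : ℝ) : CircleSusp p v₀ :=
  if y ≤ 2 then wedgeArm p v₀ v₀ (2 - y) else wedgeLoop p v₀ (y - 2)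

@[fun_prop]
lemma continuous_returnPath {A : Type*} [TopologicalSpace A] {g : A → ℝ}
    (hg : Continuous g) : Continuous fun a => returnPath p v₀ (g a) := by
  unfold returnPath
  refine Continuous.if_le (by fun_prop) (by fun_prop) (by fun_prop) (by fun_prop) ?_
  intro a ha
  exact (wedgeLoop_end p v₀ v₀ (by simp [ha]) (by simp [ha])).symm

/-- The path which, as `y` runs from `0` to `3`, follows the meridian of `v` away from the base
point, the meridian of `v₀` back to it, and then the circle. -/
noncomputable def threePhase (v : V) (y : ℝ) : CircleSusp p v₀ :=
  if y ≤ 1 then wedgeArm p v₀ v y else returnPath p v₀ y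

@[fun_prop]
lemma continuous_threePhase {A : Type*} [TopologicalSpace A] {f : A → V} {g : A → ℝ}
    (hf : Continuous f) (hg : Continuous g) :
    Continuous fun a => threePhase p v₀ (f a) (g a) := by
  unfold threePhase
  refine Continuous.if_le (by fun_prop) (by fun_prop) (by fun_prop) (by fun_prop) ?_
  intro a ha
  rw [ha, returnPath, if_pos (by norm_num)]
  exact wedgeArm_one p v₀ _ _ (by norm_num) (by norm_num)

lemma threePhase_low (v : V) {y : ℝ} (hy : y ≤ 1) : threePhase p v₀ v y = wedgeArm p v₀ v y :=
  if_pos hy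

lemma threePhase_mid (v : V) {y : ℝ} (hy : 1 ≤ y) (hy' : y ≤ 2) :
    threePhase p v₀ v y = wedgeArm p v₀ v₀ (2 - y) := by
  unfold threePhase
  split_ifs with h
  · exact wedgeArm_one p v₀ _ _ hy (by linarith)
  · rw [returnPath, if_pos hy']

lemma threePhase_high (v : V) {y : ℝ} (hy : 2 ≤ y) :
    threePhase p v₀ v y = wedgeLoop p v₀ (y - 2) := by
  unfold threePhase returnPath
  rw [if_neg (by linarith)]
  split_ifs with h
  · exact (wedgeLoop_end p v₀ v₀ (Or.inl (by linarith)) (by linarith)).symm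
  · rfl

/-- The homotopy that contracts the excursion along the meridian of `v₀` and back in
`threePhase p v₀ v₀`, leaving the circle. The variable `u = 3 * x - 2 + τ * (2 - 2 * x)` is the
position relative to the start of the circle phase; it moves from `3 * x - 2` to `x`. -/
noncomputable def shrinkLoop (τ x : ℝ) : CircleSusp p v₀ :=
  if 3 * x - 2 + τ * (2 - 2 * x) ≤ 0 then
    wedgeArm p v₀ v₀ (min (3 * x) (-(3 * x - 2 + τ * (2 - 2 * x))))
  else wedgeLoop p v₀ (3 * x - 2 + τ * (2 - 2 * x))

lemma continuous_shrinkLoop : Continuous fun a : ℝ × ℝ => shrinkLoop p v₀ a.1 a.2 := by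
  unfold shrinkLoop
  refine Continuous.if_le (by fun_prop) (by fun_prop) (by fun_prop) (by fun_prop) ?_
  intro a ha
  exact (wedgeLoop_end p v₀ v₀ (Or.inl ha.le) (min_le_of_right_le (by rw [ha]; simp))).symm

/-- The homotopy from the composite `Pinch V → S¹ ∨ S(V) → Pinch V` to the identity. At time `τ`
the segment over `v` is followed by the segment over `v₀`, run backwards from its end and then
forwards again, with an ever smaller part of it reached; the first phase takes up all of `[0,1]`
at time `1`. -/
noncomputable def shrinkPinch (τ : ℝ) (v : V) (x : ℝ) : Pinch V :=
  if (3 - 2 * τ) * x ≤ 1 then pinchPt v ((3 - 2 * τ) * x)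
  else pinchPt v₀ (max (2 - (3 - 2 * τ) * x) ((3 - 2 * τ) * x - 2 + 2 * τ))

lemma continuous_shrinkPinch :
    Continuous fun a : ℝ × V × ℝ => shrinkPinch v₀ a.1 a.2.1 a.2.2 := by
  unfold shrinkPinch
  refine Continuous.if_le (by fun_prop) (by fun_prop) (by fun_prop) (by fun_prop) ?_
  intro a ha
  exact pinchPt_end _ _ (Or.inr ha.ge) (Or.inr (le_max_of_le_left (by linarith)))

lemma pinch_htpyEquiv_wedge : Nonempty (Pinch V ≃ₕ CircleSusp p v₀) := by
  have hT0 : ∀ (v w : V) (y : ℝ), y = 0 → threePhase p v₀ v y = wedgeArm p v₀ w 0 := by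
    rintro v w y rfl
    rw [threePhase_low p v₀ v zero_le_one]
    exact wedgeArm_zero p v₀ _ _ le_rfl le_rfl
  have hT3 : ∀ (v w : V) (y : ℝ), y = 3 → threePhase p v₀ v y = wedgeArm p v₀ w 0 := by
    rintro v w y rfl
    rw [threePhase_high p v₀ v (by norm_num)]
    exact wedgeLoop_end p v₀ _ (by norm_num) le_rfl
  obtain ⟨F, hF⟩ := pinch_lift (V := V) (fun v x => threePhase p v₀ v (3 * x)) (by fun_prop)
    (fun v w => (hT0 v w _ (by simp)).trans (hT0 w w _ (by simp)).symm)
    (fun v w => (hT3 v w _ (by simp)).trans (hT0 w w _ (by simp)).symm)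
  obtain ⟨G, hG, hG'⟩ := wedge_lift p v₀ (pinchPt v₀) pinchPt (by fun_prop) (by fun_prop)
    (fun v => pinchPt_end _ _ (by simp) (by simp)) (pinchPt_end _ _ (by simp) (by simp))
    (fun v w => pinchPt_end _ _ (by simp) (by simp))
  refine ⟨⟨F, G, ?_, ?_⟩⟩
  · refine pinch_homotopic (shrinkPinch v₀) (continuous_shrinkPinch v₀) ?_ ?_ ?_ ?_
    · intro τ _ v w
      simp only [shrinkPinch, mul_zero, zero_le_one, if_true]
      exact pinchPt_end _ _ (by simp) (by simp)
    · rintro τ ⟨h0, h1⟩ v w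
      simp only [shrinkPinch, mul_zero, zero_le_one, if_true, mul_one]
      split_ifs with h
      · exact pinchPt_end _ _ (Or.inr (by linarith)) (by simp)
      · exact pinchPt_end _ _ (Or.inr (le_max_of_le_right (by linarith))) (by simp)
    · rintro v x ⟨h0, h1⟩
      rw [ContinuousMap.comp_apply, hF v x ⟨h0, h1⟩]
      have e : (3 - 2 * 0) * x = 3 * x := by ring
      simp only [shrinkPinch, e]
      split_ifs with h
      · rw [threePhase_low p v₀ v h, hG' _ _ ⟨by linarith, h⟩]
      rcases le_total (3 * x) 2 with h' | h'
      · rw [threePhase_mid p v₀ v (by linarith) h', hG' _ _ ⟨by linarith, by linarith⟩,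
          max_eq_left (by linarith)]
      · rw [threePhase_high p v₀ v h', hG _ ⟨by linarith, by linarith⟩,
          max_eq_right (by linarith)]
        congr 1; ring
    · rintro v x ⟨h0, h1⟩
      have e : (3 - 2 * 1) * x = x := by ring
      simp only [shrinkPinch, e, if_pos h1]; rfl
  · refine wedge_homotopic p v₀ (shrinkLoop p v₀)
      (fun τ v x => threePhase p v₀ v ((3 - 2 * τ) * x))
      (continuous_shrinkLoop p v₀) (by fun_prop) ?_ ?_ ?_ ?_ ?_ ?_ ?_
    · rintro τ ⟨h0, h1⟩ v
      rw [hT0 v v₀ _ (by simp), shrinkLoop, if_pos (by linarith)]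
      exact wedgeArm_zero p v₀ _ _ (by simp) le_rfl
    · rintro τ ⟨h0, h1⟩
      rw [shrinkLoop, if_neg (by linarith), shrinkLoop, if_pos (by linarith)]
      exact wedgeLoop_end p v₀ _ (Or.inr (by linarith)) (by simp)
    · rintro τ ⟨h0, h1⟩ v w
      -- Both ends lie on the part of the path that does not depend on `v`.
      rcases le_total (3 - 2 * τ) 2 with h | h
      · rw [threePhase_mid p v₀ v (by linarith) (by linarith),
          threePhase_mid p v₀ w (by linarith) (by linarith)]
      · rw [threePhase_high p v₀ v (by linarith), threePhase_high p v₀ w (by linarith)]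
    · rintro x ⟨h0, h1⟩
      rw [ContinuousMap.comp_apply, hG x ⟨h0, h1⟩, hF _ x ⟨h0, h1⟩]
      have e : 3 * x - 2 + 0 * (2 - 2 * x) = 3 * x - 2 := by ring
      simp only [shrinkLoop, e]
      split_ifs with h
      · rcases le_total (3 * x) 1 with h' | h'
        · rw [threePhase_low p v₀ v₀ h', min_eq_left (by linarith)]
        · rw [threePhase_mid p v₀ v₀ h' (by linarith), min_eq_right (by linarith)]
          congr 1; ring
      · rw [threePhase_high p v₀ v₀ (by linarith)]
    · intro v x hx
      rw [ContinuousMap.comp_apply, hG' v x hx, hF _ x hx]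
      congr 1; ring
    · rintro x ⟨h0, h1⟩
      have e : 3 * x - 2 + 1 * (2 - 2 * x) = x := by ring
      simp only [shrinkLoop, e]
      split_ifs with h
      · exact (wedgeLoop_end p v₀ v₀ (Or.inl h) (min_le_of_right_le (by linarith))).symm
      · rfl
    · rintro v x ⟨h0, h1⟩
      have e : (3 - 2 * 1) * x = x := by ring
      rw [e, threePhase_low p v₀ v h1]; rfl

end PinchWedge

/-- For a nonempty space `V` and a point `p ∈ S¹`, the mapping cone of the
inclusion `{p} × V ↪ S¹ × V` is homotopy equivalent to the wedge `S¹ ∨ S(V)` of a circle and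
the unreduced suspension of `V`. -/
theorem mappingCone_htpyEquiv_wedge_circle_susp
    (V : Type*) [TopologicalSpace V] [Nonempty V] (p : Circle) (v : V) :
    Nonempty ((MappingCone (V := V) p) ≃ₕ
      Wedge p (Quot.mk (SuspRel V) (v, 0) : Susp V)) := by
  obtain ⟨e⟩ := mappingCone_htpyEquiv_pinch (V := V) p
  obtain ⟨e'⟩ := pinch_htpyEquiv_wedge p v
  exact ⟨e.trans e'⟩
end

section
/- Let n ≥ 0 and k ≥ 1 be integers, let f_d : ℂ^{n+1} → ℂ be a polynomial, and let g : ℂ^{n+1} × ℂ × ℂ → ℂ (with variables written (x, z, t)) be analytic on a neighbourhood of a point ξ = (q, 0, t₀) with g(ξ) ≠ 0. Then there exist an open neighbourhood U of ξ on which g is analytic and nonvanishing, an analytic function h : U → ℂ with h(x,z,t)^k = g(x,z,t) and h(x,z,t) ≠ 0 for all (x,z,t) ∈ U, such that the analytic map φ : U → ℂ^{n+1} × ℂ × ℂ defined by φ(x, z, t) = (x, z·h(x,z,t), t) is a homeomorphism of U onto an open set W ⊆ ℂ^{n+1} × ℂ × ℂ, and φ maps the set {(x,z,t) ∈ U : f_d(x)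 + z^k · g(x,z,t) = 0} bijectively onto the set {(x,w,t) ∈ W : f_d(x) + w^k = 0}. -/
open Topology

/-!
Dividing `g` by its value at the base point `ξ` gives a function close to `1` near `ξ`, where the
principal branch of the `k`-th root is analytic; multiplying that root by a `k`-th root of `g ξ`
gives an analytic `k`-th root `h` of `g` (`exists_analyticAt_root`). Since `z = 0` at `ξ`, the
derivative of `φ(x, z, t) = (x, z·h(x, z, t), t)` at `ξ` is the diagonal map
`(dx, dz, dt) ↦ (dx, h(ξ)·dz, dt)`, which is invertible. The inverse function theorem then makes
`φ` a homeomorphism near `ξ` (`exists_openPartialHomeomorph_mul`). Because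
`(z·h)^k = z^k·g`, the equation `f_d + w^k = 0` pulls back under `φ` to `f_d + z^k·g = 0`.
-/

/-- A nonvanishing analytic germ has an analytic `k`-th root. -/
theorem exists_analyticAt_root {E : Type*} [NormedAddCommGroup E] [NormedSpace ℂ E]
    {k : ℕ} (hk : k ≠ 0) {g : E → ℂ} {a : E} (hg : AnalyticAt ℂ g a) (hg0 : g a ≠ 0) :
    ∃ h : E → ℂ, AnalyticAt ℂ h a ∧ ∀ p, h p ^ k = g p := by
  refine ⟨fun p => g a ^ ((k : ℂ)⁻¹) * (g p / g a) ^ ((k : ℂ)⁻¹), ?_, fun p => ?_⟩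
  · refine analyticAt_const.mul ((hg.div analyticAt_const hg0).cpow analyticAt_const ?_)
    simp [div_self hg0]
  · rw [mul_pow, Complex.cpow_nat_inv_pow _ hk, Complex.cpow_nat_inv_pow _ hk,
      mul_div_cancel₀ _ hg0]

/-- The map `(x, z, t) ↦ (x, z·h(x, z, t), t)` is a local homeomorphism at every point with
`z = 0` and `h ≠ 0`. -/
theorem exists_openPartialHomeomorph_mul {E : Type*} [NormedAddCommGroup E] [NormedSpace ℂ E]
    [CompleteSpace E] {h : E × ℂ × ℂ → ℂ} {q : E} {t₀ : ℂ}
    (hh : AnalyticAt ℂ h (q, 0, t₀)) (hh0 : h (q, 0, t₀) ≠ 0) :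
    ∃ e : OpenPartialHomeomorph (E × ℂ × ℂ) (E × ℂ × ℂ), (q, 0, t₀) ∈ e.source ∧
      ⇑e = fun p => (p.1, p.2.1 * h p, p.2.2) := by
  let L : (E × ℂ × ℂ) ≃L[ℂ] E × ℂ × ℂ :=
    (ContinuousLinearEquiv.refl ℂ E).prodCongr
      ((ContinuousLinearEquiv.unitsEquivAut ℂ (Units.mk0 _ hh0)).prodCongr
        (ContinuousLinearEquiv.refl ℂ ℂ))
  have hL : HasStrictFDerivAt (fun p : E × ℂ × ℂ => (p.1, p.2.1 * h p, p.2.2))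
      (L : (E × ℂ × ℂ) →L[ℂ] E × ℂ × ℂ) (q, 0, t₀) := by
    have h2 : HasStrictFDerivAt (fun p : E × ℂ × ℂ => p.2)
        (ContinuousLinearMap.snd ℂ E (ℂ × ℂ)) (q, 0, t₀) := hasStrictFDerivAt_snd
    have h1 : HasStrictFDerivAt (fun p : E × ℂ × ℂ => p.1)
        (ContinuousLinearMap.fst ℂ E (ℂ × ℂ)) (q, 0, t₀) := hasStrictFDerivAt_fst
    refine (h1.prodMk ((h2.fst.mul hh.hasStrictFDerivAt).prodMk h2.snd)).congr_fderiv ?_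
    -- The term of the product rule containing the derivative of `h` carries the factor `z = 0`.
    ext p <;> simp [L, mul_comm]
  exact ⟨hL.toOpenPartialHomeomorph _, hL.mem_toOpenPartialHomeomorph_source,
    hL.toOpenPartialHomeomorph_coe⟩

/-- (Local analytic `k`-th root normal form.) Let `f_d : ℂ^{n+1} → ℂ` be a
polynomial and let `g : ℂ^{n+1} × ℂ × ℂ → ℂ` (variables `(x, z, t)`) be analytic near
`ξ = (q, 0, t₀)` with `g(ξ) ≠ 0`, and let `k ≥ 1`. Then there are an open neighbourhood `U`
of `ξ` on which `g` is analytic and nonvanishing, an analytic `k`-th root `h` of `g` on `U`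
(nonvanishing on `U`), such that the analytic map `φ(x, z, t) = (x, z·h(x,z,t), t)` is a
homeomorphism of `U` onto an open set `W`, and `φ` maps
`{(x,z,t) ∈ U : f_d(x) + z^k·g(x,z,t) = 0}` bijectively onto
`{(x,w,t) ∈ W : f_d(x) + w^k = 0}`. -/
theorem local_analytic_kth_root_normal_form
    {n k : ℕ} (hk : 1 ≤ k)
    (fd : (Fin (n + 1) → ℂ) → ℂ)
    (hfd : ∃ P : MvPolynomial (Fin (n + 1)) ℂ, ∀ x, fd x = MvPolynomial.eval x P)
    (g : (Fin (n + 1) → ℂ) × ℂ × ℂ → ℂ)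
    (q : Fin (n + 1) → ℂ) (t₀ : ℂ)
    (hg : AnalyticAt ℂ g (q, 0, t₀))
    (hg0 : g (q, 0, t₀) ≠ 0) :
    ∃ U : Set ((Fin (n + 1) → ℂ) × ℂ × ℂ), IsOpen U ∧ (q, 0, t₀) ∈ U ∧
      AnalyticOnNhd ℂ g U ∧ (∀ p ∈ U, g p ≠ 0) ∧
      ∃ h : (Fin (n + 1) → ℂ) × ℂ × ℂ → ℂ,
        AnalyticOnNhd ℂ h U ∧
        (∀ p ∈ U, h p ^ k = g p ∧ h p ≠ 0) ∧
        AnalyticOnNhd ℂ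
          (fun p : (Fin (n + 1) → ℂ) × ℂ × ℂ => (p.1, p.2.1 * h p, p.2.2)) U ∧
        ∃ W : Set ((Fin (n + 1) → ℂ) × ℂ × ℂ), IsOpen W ∧
          (∃ e : U ≃ₜ W, ∀ p : U,
            (e p : (Fin (n + 1) → ℂ) × ℂ × ℂ) = (p.1.1, p.1.2.1 * h p.1, p.1.2.2)) ∧
          Set.BijOn (fun p : (Fin (n + 1) → ℂ) × ℂ × ℂ => (p.1, p.2.1 * h p, p.2.2))
            {p : (Fin (n + 1) → ℂ) × ℂ × ℂ | p ∈ U ∧ fd p.1 + p.2.1 ^ k * g p = 0}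
            {p : (Fin (n + 1) → ℂ) × ℂ × ℂ | p ∈ W ∧ fd p.1 + p.2.1 ^ k = 0} := by
  have hk0 : k ≠ 0 := by omega
  obtain ⟨h, hh, hpow⟩ := exists_analyticAt_root hk0 hg hg0
  have hne : ∀ p, g p ≠ 0 → h p ≠ 0 := fun p hp h0 => hp (by rw [← hpow p, h0, zero_pow hk0])
  obtain ⟨e, heξ, he⟩ := exists_openPartialHomeomorph_mul hh (hne _ hg0)
  obtain ⟨V, hV, hVo, hξV⟩ := eventually_nhds_iff.1
    (hg.eventually_analyticAt.and
      (hh.eventually_analyticAt.and (hg.continuousAt.eventually_ne hg0)))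
  -- The restriction of the local homeomorphism to the set where `g`, `h` are well behaved.
  let e' := e.restrOpen V hVo
  have he' : ⇑e' = fun p => (p.1, p.2.1 * h p, p.2.2) := he
  have hsub : ∀ p ∈ e'.source, p ∈ V := fun p hp => hp.2
  refine ⟨e'.source, e'.open_source, ⟨heξ, hξV⟩, fun p hp => (hV p (hsub p hp)).1,
    fun p hp => (hV p (hsub p hp)).2.2, h, fun p hp => (hV p (hsub p hp)).2.1,
    fun p hp => ⟨hpow p, hne p (hV p (hsub p hp)).2.2⟩, fun p hp => ?_,
    e'.target, e'.open_target,
    ⟨e'.toHomeomorphSourceTarget, fun p => congrFun he' p.1⟩, ?_⟩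
  · exact analyticAt_fst.prod ((((analyticAt_fst.comp analyticAt_snd).mul
      (hV p (hsub p hp)).2.1)).prod (analyticAt_snd.comp analyticAt_snd))
  · rw [← he']
    have key : ∀ p, fd (e' p).1 + (e' p).2.1 ^ k = fd p.1 + p.2.1 ^ k * g p := fun p => by
      rw [he', ← hpow p, ← mul_pow]
    refine ⟨fun p hp => ⟨e'.map_source hp.1, (key p).trans hp.2⟩,
      e'.injOn.mono fun p hp => hp.1, fun w hw => ?_⟩
    refine ⟨e'.symm w, ⟨e'.map_target hw.1, ?_⟩, e'.right_inv hw.1⟩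
    rw [← key, e'.right_inv hw.1]
    exact hw.2
end
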